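/- Let A, n, k, s, t be integers with A > 2 and n > 3 such that χ_n(A) = 2k and ψ_s(A) ≡ ψ_t(A) (mod k). Then s ≡ t (mod 2n) or s ≡ −t (mod 2n). -/

import Mathlib

/-- The Lucas sequence `ψ_n(A)` for natural indices:
`ψ_0 = 0`, `ψ_1 = 1`, `ψ_{n+2} = A·ψ_{n+1} − ψ_n`. -/
def psiNat (A : ℤ) : ℕ → ℤ
  | 0 => 0
  | 1 => 1
  | n + 2 => A * psiNat A (n + 1) - psiNat A n

/-- The Lucas sequence `χ_n(A)` for natural indices:
`χ_0 = 2`, `χ_1 = A`, `χ_{n+2} = A·χ_{n+1} − χ_n`. -/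
def chiNat (A : ℤ) : ℕ → ℤ
  | 0 => 2
  | 1 => A
  | n + 2 => A * chiNat A (n + 1) - chiNat A n

/-- The Lucas sequence `ψ_n(A)` for `n ∈ ℤ`: the unique solution of
`x_{n+1} = A·x_n − x_{n−1}` with `ψ_0 = 0`, `ψ_1 = 1`
(for negative indices, `ψ_{−n} = −ψ_n`). -/
def psi (A : ℤ) : ℤ → ℤ
  | .ofNat n => psiNat A n
  | .negSucc n => -psiNat A (n + 1)

/-- The Lucas sequence `χ_n(A)` for `n ∈ ℤ`: the unique solution of
`x_{n+1} = A·x_n − x_{n−1}` with `χ_0 = 2`, `χ_1 = A`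
(for negative indices, `χ_{−n} = χ_n`). -/
def chi (A : ℤ) : ℤ → ℤ
  | .ofNat n => chiNat A n
  | .negSucc n => chiNat A (n + 1)

/-!
Modulo `k` the sequence `ψ` is antiperiodic with antiperiod `2n`, because
`ψ_{m+2n} + ψ_m = χ_n ψ_{m+n} = 2k ψ_{m+n}`, and it is odd. Hence, up to sign, `ψ_s` modulo `k`
depends only on `s` modulo `2n` up to sign, and the indices may be taken in `[0, |n|]`.

The signs of `A` and `n` only affect the signs of `ψ` and `χ`, so let `A > 2` and `n > 0`. For
`0 ≤ a < b ≤ n` both `ψ_a` and `ψ_b` are less than `k`. So `k` does not divide `ψ_b - ψ_a`, and if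
it divides `ψ_a + ψ_b` then `2 (ψ_a + ψ_b) = 2k = χ_n`. By comparison of growth rates, this last
equation is possible only for `A = n = 3`, where indeed `2 (ψ_1 + ψ_3) = 2 (1 + 8) = χ_3`.
-/

/-- Congruence modulo `k` up to sign: the relation between the indices `s` and `t`, and between the
values `ψ_s` and `ψ_t`, in the theorem. -/
def ModEqUpToSign (k x y : ℤ) : Prop :=
  x ≡ y [ZMOD k] ∨ x ≡ -y [ZMOD k]

namespace ModEqUpToSign

variable {k x y z : ℤ}

theorem iff_dvd : ModEqUpToSign k x y ↔ k ∣ y - x ∨ k ∣ x + y := by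
  rw [ModEqUpToSign, Int.modEq_iff_dvd, Int.modEq_iff_dvd, ← dvd_neg (b := -y - x), neg_sub,
    sub_neg_eq_add]

theorem of_abs_eq (h : |x| = |y|) : ModEqUpToSign k x y :=
  (abs_eq_abs.mp h).imp (fun h ↦ by rw [h]) (fun h ↦ by rw [h])

theorem symm (h : ModEqUpToSign k x y) : ModEqUpToSign k y x := by
  rwa [iff_dvd, dvd_sub_comm, add_comm, ← iff_dvd]

theorem trans (hxy : ModEqUpToSign k x y) (hyz : ModEqUpToSign k y z) : ModEqUpToSign k x z := by
  rcases hxy with hxy | hxy <;> rcases hyz with hyz | hyz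
  · exact .inl (hxy.trans hyz)
  · exact .inr (hxy.trans hyz)
  · exact .inr (hxy.trans hyz.neg)
  · exact .inl (hxy.trans (neg_neg z ▸ hyz.neg))

theorem abs_modulus_iff : ModEqUpToSign |k| x y ↔ ModEqUpToSign k x y := by
  simp only [ModEqUpToSign, Int.modEq_abs]

theorem exists_two_mul_le (hk : k ≠ 0) (x : ℤ) :
    ∃ y, 0 ≤ y ∧ 2 * y ≤ |k| ∧ ModEqUpToSign k x y := by
  have hpos : 0 < k.natAbs := Int.natAbs_pos.mpr hk
  refine ⟨|x.bmod k.natAbs|, abs_nonneg _, ?_, ?_⟩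
  · have hlower := Int.le_bmod (x := x) hpos
    have hupper := Int.bmod_le (x := x) hpos
    rw [Int.abs_eq_natAbs k]
    grind
  · have hbmod : x ≡ x.bmod k.natAbs [ZMOD k] :=
      Int.modEq_iff_dvd.mpr (Int.natAbs_dvd.mp Int.dvd_bmod_sub_self)
    exact trans (.inl hbmod) (of_abs_eq (abs_abs _).symm)

end ModEqUpToSign

/-- `f` is a two-sided Lucas sequence with parameter `A`: it solves the recurrence
`x_{m+1} = A·x_m − x_{m−1}` at every integer `m`. -/
def IsLucasSeq {R : Type*} [Ring R] (A : R) (f : ℤ → R) : Prop :=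
  ∀ m, f (m + 1) = A * f m - f (m - 1)

namespace IsLucasSeq

section Ring

variable {R : Type*} [Ring R] {A : R} {f g : ℤ → R}

theorem ext (hf : IsLucasSeq A f) (hg : IsLucasSeq A g) (h0 : f 0 = g 0) (h1 : f 1 = g 1) :
    f = g := by
  funext m
  induction m using Polynomial.Chebyshev.induct with
  | zero => exact h0
  | one => exact h1
  | add_two m ih1 ih0 =>
    have hf' := hf (m + 1)
    have hg' := hg (m + 1)
    rw [add_assoc, one_add_one_eq_two, add_sub_cancel_right] at hf' hg'
    rw [hf', hg', ih1, ih0]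
  | neg_add_one m ih0 ih1 =>
    have hfg := hf (-m)
    rw [ih1, ih0, hg (-m)] at hfg
    exact (sub_right_inj.mp hfg).symm

theorem negOnePow_smul (hf : IsLucasSeq A f) :
    IsLucasSeq (-A) fun m ↦ m.negOnePow • f m := fun m ↦ by
  simp only [hf m, Int.negOnePow_succ, Int.negOnePow_sub, Int.negOnePow_one, mul_neg, mul_one,
    Units.neg_smul, smul_sub, smul_neg, mul_smul_comm, neg_mul, sub_neg_eq_add]

end Ring

theorem of_natCast {R : Type*} [CommRing R] {A ε : R} {f : ℤ → R}
    (hparity : ∀ m, f (-m) = ε * f m)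
    (hnat : ∀ m : ℕ, f (m + 1) = A * f m - f (m - 1)) : IsLucasSeq A f := fun m ↦ by
  obtain ⟨a, rfl | rfl⟩ := m.eq_nat_or_neg
  · exact hnat a
  · rw [neg_add_eq_sub, ← neg_sub, ← neg_add', hparity, hparity, hparity, hnat]
    ring

end IsLucasSeq

section Sequences

variable (A m n : ℤ)

theorem psi_zero : psi A 0 = 0 := rfl

theorem psi_one : psi A 1 = 1 := rfl

theorem chi_zero : chi A 0 = 2 := rfl

theorem chi_one : chi A 1 = A := rfl

theorem psi_neg : psi A (-m) = -psi A m := by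
  rcases m with (_ | m) | m
  · rfl
  · rfl
  · exact (neg_neg _).symm

theorem chi_neg : chi A (-m) = chi A m := by
  rcases m with (_ | m) | m <;> rfl

theorem isLucasSeq_psi : IsLucasSeq A (psi A) := by
  refine .of_natCast (ε := -1) (fun m ↦ by rw [psi_neg, neg_one_mul]) fun m ↦ ?_
  cases m with
  | zero => simp [psi_neg, psi_zero, psi_one]
  | succ m =>
    rw [Nat.cast_succ, add_sub_cancel_right]
    rfl

theorem isLucasSeq_chi : IsLucasSeq A (chi A) := by
  refine .of_natCast (ε := 1) (fun m ↦ by rw [chi_neg, one_mul]) fun m ↦ ?_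
  cases m with
  | zero => simp [chi_neg, chi_zero, chi_one, mul_two]
  | succ m =>
    rw [Nat.cast_succ, add_sub_cancel_right]
    rfl

theorem psi_add_add_psi_sub : psi A (m + n) + psi A (m - n) = chi A n * psi A m := by
  have hleft : IsLucasSeq A fun n ↦ psi A (m + n) + psi A (m - n) := fun n ↦ by
    have hadd := isLucasSeq_psi A (m + n)
    have hsub := isLucasSeq_psi A (m - n)
    grind
  have hright : IsLucasSeq A fun n ↦ chi A n * psi A m := fun n ↦ by
    linear_combination psi A m * isLucasSeq_chi A n
  refine congrFun (hleft.ext hright ?_ ?_) n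
  · rw [add_zero, sub_zero, chi_zero, two_mul]
  · rw [isLucasSeq_psi A m, sub_add_cancel, chi_one]

theorem chi_eq_mul_psi_sub : chi A n = A * psi A n - 2 * psi A (n - 1) := by
  have hsum := psi_add_add_psi_sub A 1 n
  rw [← neg_sub n 1, psi_neg, add_comm 1 n, isLucasSeq_psi A n, psi_one, mul_one] at hsum
  linear_combination -hsum

theorem psi_neg_left : psi (-A) m = (m + 1).negOnePow • psi A m := by
  have hsign : IsLucasSeq (-A) fun m ↦ (m + 1).negOnePow • psi A m := fun m ↦ by
    have hsmul := (isLucasSeq_psi A).negOnePow_smul m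
    simp only [Int.negOnePow_succ, Int.negOnePow_sub, Units.neg_smul] at hsmul ⊢
    grind
  exact congrFun ((isLucasSeq_psi (-A)).ext hsign rfl rfl) m

theorem chi_neg_left : chi (-A) m = m.negOnePow • chi A m :=
  congrFun ((isLucasSeq_chi (-A)).ext (isLucasSeq_chi A).negOnePow_smul rfl
    (by simp [chi_one])) m

theorem abs_psi_abs : |psi (|A|) m| = |psi A m| := by
  rcases abs_choice A with h | h <;> rw [h]
  rw [psi_neg_left, Units.smul_def, smul_eq_mul, abs_mul, Int.abs_negOnePow, one_mul]

theorem abs_chi_abs_abs : |chi (|A|) (|n|)| = |chi A n| := by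
  have hn : chi |A| |n| = chi |A| n := by
    rcases abs_choice n with h | h <;> rw [h]
    exact chi_neg _ _
  rw [hn]
  rcases abs_choice A with h | h <;> rw [h]
  rw [chi_neg_left, Units.smul_def, smul_eq_mul, abs_mul, Int.abs_negOnePow, one_mul]

end Sequences

section Congruence

variable {A n k s t : ℤ}

theorem psi_add_two_mul_mul_modEqUpToSign (hchi : chi A n = 2 * k) (m q : ℤ) :
    ModEqUpToSign k (psi A (m + 2 * n * q)) (psi A m) := by
  have hstep (q : ℤ) :
      ModEqUpToSign k (psi A (m + 2 * n * (q + 1))) (psi A (m + 2 * n * q)) := by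
    have hsum := psi_add_add_psi_sub A (m + 2 * n * q + n) n
    refine ModEqUpToSign.iff_dvd.mpr (.inr ⟨2 * psi A (m + 2 * n * q + n), ?_⟩)
    grind
  induction q with
  | zero => exact .of_abs_eq (by simp)
  | succ q ih => exact (hstep q).trans ih
  | pred q ih => exact .trans (by simpa using (hstep (-q - 1)).symm) ih

theorem psi_modEqUpToSign (hchi : chi A n = 2 * k) (hst : ModEqUpToSign (2 * n) s t) :
    ModEqUpToSign k (psi A s) (psi A t) := by
  rcases hst with hst | hst <;> obtain ⟨q, hq⟩ := hst.symm.dvd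
  · exact sub_eq_iff_eq_add'.mp hq ▸ psi_add_two_mul_mul_modEqUpToSign hchi t q
  · refine (sub_eq_iff_eq_add'.mp hq ▸ psi_add_two_mul_mul_modEqUpToSign hchi (-t) q).trans
      (.of_abs_eq ?_)
    rw [psi_neg, abs_neg]

end Congruence

section Growth

variable {A a b k m n : ℤ}

theorem psi_strictMono (hA : 2 ≤ A) : StrictMono (psi A) := by
  have hnat (m : ℕ) : 0 ≤ psi A m ∧ psi A m < psi A (m + 1) := by
    induction m with
    | zero => exact ⟨le_rfl, zero_lt_one⟩
    | succ m ih =>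
      have hrec := isLucasSeq_psi A (m + 1)
      rw [add_sub_cancel_right] at hrec
      push_cast
      constructor <;> nlinarith
  refine strictMono_int_of_lt_succ fun m ↦ ?_
  cases m with
  | ofNat m => exact (hnat m).2
  | negSucc m =>
    rw [Int.negSucc_eq, neg_add, neg_add_cancel_right, ← neg_add, psi_neg, psi_neg]
    exact neg_lt_neg (hnat m).2

theorem psi_nonneg (hA : 2 ≤ A) (hm : 0 ≤ m) : 0 ≤ psi A m :=
  (psi_strictMono hA).monotone hm

theorem two_mul_psi_lt_psi_add_one (hA : 2 < A) (m : ℤ) : 2 * psi A m < psi A (m + 1) := by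
  have hmono : StrictMono (psi A) := psi_strictMono hA.le
  rcases lt_or_ge m 0 with hm | hm
  · have hneg : psi A m < 0 := hmono hm
    have hsucc : psi A m < psi A (m + 1) := hmono (lt_add_one m)
    linarith
  · have hnonneg : 0 ≤ psi A m := psi_nonneg hA.le hm
    have hpred : psi A (m - 1) < psi A m := hmono (sub_one_lt m)
    rw [isLucasSeq_psi A m]
    nlinarith

theorem two_mul_psi_lt_chi (hA : 2 < A) (hn : 0 ≤ n) (hbn : b ≤ n) : 2 * psi A b < chi A n := by
  have hb : psi A b ≤ psi A n := (psi_strictMono hA.le).monotone hbn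
  have hdouble := two_mul_psi_lt_psi_add_one hA (n - 1)
  have hnonneg : 0 ≤ psi A n := psi_nonneg hA.le hn
  rw [sub_add_cancel] at hdouble
  rw [chi_eq_mul_psi_sub]
  nlinarith

theorem two_mul_psi_three_add_psi_three_ne (hn : n ≠ 3) (ha : 0 ≤ a) (han : a < n) :
    2 * (psi 3 a + psi 3 (n - 1)) ≠ psi 3 n := by
  have hmono : StrictMono (psi 3) := psi_strictMono (by norm_num)
  have hrec : psi 3 n = 3 * psi 3 (n - 1) - psi 3 (n - 2) := by
    grind [isLucasSeq_psi 3 (n - 1)]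
  have hrec' : psi 3 (n - 1) = 3 * psi 3 (n - 2) - psi 3 (n - 3) := by
    grind [isLucasSeq_psi 3 (n - 2)]
  intro heq
  obtain rfl | rfl | han : a = n - 1 ∨ a = n - 2 ∨ a ≤ n - 3 := by lia
  · have hodd : psi 3 (n - 1) = psi 3 (2 - n) := by
      rw [← neg_sub n 2, psi_neg]
      linarith
    exact absurd (hmono.injective hodd) (by lia)
  · have hzero : psi 3 (n - 3) = psi 3 0 := by
      rw [psi_zero]
      linarith
    exact absurd (hmono.injective hzero) (by lia)
  · have hle : psi 3 a ≤ psi 3 (n - 3) := hmono.monotone han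
    have hdouble := two_mul_psi_lt_psi_add_one (A := 3) (by norm_num) (n - 3)
    have hnonneg : 0 ≤ psi 3 (n - 3) := psi_nonneg (by norm_num) (ha.trans han)
    rw [show n - 3 + 1 = n - 2 by ring] at hdouble
    linarith

theorem two_mul_psi_add_psi_ne_chi (hA : 2 < A) (hAn : A ≠ 3 ∨ n ≠ 3) (ha : 0 ≤ a) (hab : a < b)
    (hbn : b ≤ n) : 2 * (psi A a + psi A b) ≠ chi A n := by
  have hmono : StrictMono (psi A) := psi_strictMono hA.le
  have hdouble := two_mul_psi_lt_psi_add_one hA (n - 1)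
  have hnonneg : 0 ≤ psi A n := psi_nonneg hA.le (by lia)
  have ha_le : psi A a ≤ psi A (n - 1) := hmono.monotone (by lia)
  rw [sub_add_cancel] at hdouble
  rw [chi_eq_mul_psi_sub]
  obtain hbn | rfl : b ≤ n - 1 ∨ b = n := by lia
  · have hb_le : psi A b ≤ psi A (n - 1) := hmono.monotone hbn
    have ha_lt : psi A a < psi A b := hmono hab
    nlinarith
  obtain rfl | hA : A = 3 ∨ 4 ≤ A := by lia
  · intro heq
    exact two_mul_psi_three_add_psi_three_ne (hAn.resolve_left (by simp)) ha hab (by linarith)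
  · nlinarith

theorem not_psi_modEqUpToSign_of_lt (hA : 2 < A) (hAn : A ≠ 3 ∨ n ≠ 3) (hchi : chi A n = 2 * k)
    (ha : 0 ≤ a) (hab : a < b) (hbn : b ≤ n) : ¬ModEqUpToSign k (psi A a) (psi A b) := by
  have hn : 0 ≤ n := ha.trans (hab.le.trans hbn)
  have ha_nonneg : 0 ≤ psi A a := psi_nonneg hA.le ha
  have hlt : psi A a < psi A b := psi_strictMono hA.le hab
  have hb_lt : 2 * psi A b < chi A n := two_mul_psi_lt_chi hA hn hbn
  rw [ModEqUpToSign.iff_dvd, not_or]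
  constructor
  · exact fun hdvd ↦ by linarith [Int.le_of_dvd (sub_pos.mpr hlt) hdvd]
  · rintro ⟨c, hc⟩
    have hne := two_mul_psi_add_psi_ne_chi hA hAn ha hab hbn
    have hc0 : 0 < c := by nlinarith
    have hc2 : c < 2 := by nlinarith
    obtain rfl : c = 1 := by lia
    exact hne (by linarith)

theorem eq_of_psi_modEqUpToSign (hA : 2 < |A|) (hAn : |A| ≠ 3 ∨ |n| ≠ 3) (hchi : chi A n = 2 * k)
    (ha : 0 ≤ a) (han : a ≤ |n|) (hb : 0 ≤ b) (hbn : b ≤ |n|)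
    (hab : ModEqUpToSign k (psi A a) (psi A b)) : a = b := by
  wlog hle : a ≤ b generalizing a b
  · exact (this hb hbn ha han hab.symm (le_of_not_ge hle)).symm
  by_contra hne
  have hlt : a < b := lt_of_le_of_ne hle hne
  have hpos : 0 < chi (|A|) (|n|) := by
    simpa [psi_zero] using two_mul_psi_lt_chi hA (abs_nonneg n) (abs_nonneg n)
  have hchi' : chi (|A|) (|n|) = 2 * |k| := by
    rw [← abs_of_pos hpos, abs_chi_abs_abs, hchi, abs_mul, abs_two]
  have hab' : ModEqUpToSign |k| (psi (|A|) a) (psi (|A|) b) :=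
    ModEqUpToSign.abs_modulus_iff.mpr <|
      (ModEqUpToSign.of_abs_eq (abs_psi_abs A a)).trans <|
        hab.trans (.of_abs_eq (abs_psi_abs A b).symm)
  exact not_psi_modEqUpToSign_of_lt hA hAn hchi' ha hlt hbn hab'

end Growth

theorem psi_congruent_implies_index_congruent_general (A n k s t : ℤ) (hA : 2 < |A|) (hn : n ≠ 0)
    (hAn : |A| ≠ 3 ∨ |n| ≠ 3) (hchi : chi A n = 2 * k)
    (h : ModEqUpToSign k (psi A s) (psi A t)) : ModEqUpToSign (2 * n) s t := by
  have h2n : 2 * n ≠ 0 := mul_ne_zero two_ne_zero hn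
  obtain ⟨a, ha, han, hsa⟩ := ModEqUpToSign.exists_two_mul_le h2n s
  obtain ⟨b, hb, hbn, htb⟩ := ModEqUpToSign.exists_two_mul_le h2n t
  rw [abs_mul, abs_two, mul_le_mul_iff_right₀ two_pos] at han hbn
  have hab : ModEqUpToSign k (psi A a) (psi A b) :=
    (psi_modEqUpToSign hchi hsa).symm.trans (h.trans (psi_modEqUpToSign hchi htb))
  obtain rfl : a = b := eq_of_psi_modEqUpToSign hA hAn hchi ha han hb hbn hab
  exact hsa.trans htb.symm

/-- Let `A > 2`, `n > 3` with `χ_n(A) = 2k`, and suppose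
`ψ_s(A) ≡ ψ_t(A) (mod k)`. Then `s ≡ t (mod 2n)` or `s ≡ −t (mod 2n)`. -/
theorem psi_congruent_implies_index_congruent (A n k s t : ℤ) (hA : 2 < A) (hn : 3 < n)
    (hchi : chi A n = 2 * k) (h : psi A s ≡ psi A t [ZMOD k]) :
    s ≡ t [ZMOD 2 * n] ∨ s ≡ -t [ZMOD 2 * n] :=
  psi_congruent_implies_index_congruent_general A n k s t (hA.trans_le (le_abs_self A)) (by lia)
    (.inr (by grind)) hchi (.inl h)
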